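/- There exists N such that for all n ≥ N the following holds for D = {i : 1 ≤ i ≤ 2^{n+1} − 3, i odd}: every irreducible solution U of length ℓ for D whose density s(U)/ℓ lies strictly between 2/(2n−1) and 1/(n−1) has density exactly 3/(3n−2) (weight 3, length 3n−2), and, up to shift, is one of the following four solutions of length 3n−2: for i ∈ {5, 7}: (1) u_{2^{n+1}−3} = 2^{2n−3}, u_{3·2^{n−1}−i} = 2^{n−2}, u_{i·2^{n−2}−1} = 1 (all other u_d = 0); (2) u_{2^{n+1}−i} = 2^{2n−3}, u_{i·2^{n−2}−3} = 2^{n−1}, u_{3·2^{n−1}−1} = 1 (all other u_d = 0). (In each case ∑ d·u_d = 2^{3n−2} − 1.) -/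

import Mathlib

/-- The binary weight `s₂(m)`: the sum of the base-2 digits of `m`. -/
def s2 (m : ℕ) : ℕ := (Nat.digits 2 m).sum

/-- The shift map on `{0, …, 2^ℓ - 1}`: it fixes `2^ℓ - 1` and sends any other `i`
to the remainder of `2·i` modulo `2^ℓ - 1`. -/
def shift2 (ℓ i : ℕ) : ℕ := if i = 2 ^ ℓ - 1 then i else (2 * i) % (2 ^ ℓ - 1)

/-- `U : ℕ → ℕ` (supported on `D`) is a solution of length `ℓ` for `D`:
`0 ≤ u_d ≤ 2^ℓ - 1` and `∑ d·u_d` is a positive multiple of `2^ℓ - 1`. -/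
structure IsSolution (D : Finset ℕ) (ℓ : ℕ) (U : ℕ → ℕ) : Prop where
  len_pos : 1 ≤ ℓ
  bounded : ∀ d, U d ≤ 2 ^ ℓ - 1
  supp_sub : ∀ d, d ∉ D → U d = 0
  dvd : (2 ^ ℓ - 1) ∣ ∑ d ∈ D, d * U d
  pos : 0 < ∑ d ∈ D, d * U d

/-- The weight `s(U) = ∑_{d ∈ D} s₂(u_d)` of a solution. -/
def weight (D : Finset ℕ) (U : ℕ → ℕ) : ℕ := ∑ d ∈ D, s2 (U d)

/-- The support map `φ_U(k) = (∑_{d ∈ D} d·δ^k(u_d)) / (2^ℓ - 1)` of a solution,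
viewed as an `ℓ`-periodic function on `ℕ`. -/
def supportMap (D : Finset ℕ) (ℓ : ℕ) (U : ℕ → ℕ) (k : ℕ) : ℕ :=
  (∑ d ∈ D, d * (shift2 ℓ)^[k] (U d)) / (2 ^ ℓ - 1)

/-- A solution is irreducible when its support map is injective on `ℤ/ℓℤ`,
i.e. injective on `{0, …, ℓ-1}`. -/
def IrreducibleSol (D : Finset ℕ) (ℓ : ℕ) (U : ℕ → ℕ) : Prop :=
  Set.InjOn (supportMap D ℓ U) ↑(Finset.range ℓ)

/-- `U` is a shift of `V` (coordinatewise iterate of the shift map). -/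
def IsShiftOf (ℓ : ℕ) (U V : ℕ → ℕ) : Prop :=
  ∃ k, ∀ d, U d = (shift2 ℓ)^[k] (V d)

/-- The set of odd integers `1 ≤ i ≤ d`. -/
def oddUpTo (d : ℕ) : Finset ℕ := (Finset.range (d + 1)).filter (fun i => i % 2 = 1)

/-- `D = {i : 1 ≤ i ≤ 2^{n+1} - 3, i odd}`. -/
def oddD (n : ℕ) : Finset ℕ := oddUpTo (2 ^ (n + 1) - 3)

/-- The solution with `u_a = 1` and all other coordinates `0`. -/
def sol1 (a : ℕ) : ℕ → ℕ := fun d => if d = a then 1 else 0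

/-- The solution with `u_a = x`, `u_b = y` and all other coordinates `0`. -/
def sol2 (a x b y : ℕ) : ℕ → ℕ := fun d => if d = a then x else if d = b then y else 0

/-- The solution with `u_a = x`, `u_b = y`, `u_c = z` and all other coordinates `0`. -/
def sol3 (a x b y c z : ℕ) : ℕ → ℕ :=
  fun d => if d = a then x else if d = b then y else if d = c then z else 0

theorem shift2_spec {ℓ i : ℕ} (hl : 1 ≤ ℓ) (hi : i ≤ 2 ^ ℓ - 1) :
    shift2 ℓ i + (2 ^ ℓ - 1) * (i / 2 ^ (ℓ - 1)) = 2 * i ∧ shift2 ℓ i ≤ 2 ^ ℓ - 1 ∧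
      i / 2 ^ (ℓ - 1) ≤ 1 := by
  obtain ⟨l, rfl⟩ : ∃ l, ℓ = l + 1 := ⟨ℓ - 1, by omega⟩
  simp only [Nat.add_sub_cancel]
  have hp : 2 ^ (l + 1) = 2 * 2 ^ l := by ring
  have h1 : 1 ≤ 2 ^ l := Nat.one_le_two_pow
  rw [hp] at hi
  unfold shift2
  rw [hp]
  generalize 2 ^ l = q at *
  by_cases hf : i = 2 * q - 1
  · have : i / q = 1 := by
      rw [Nat.div_eq_iff (by omega)]; omega
    rw [if_pos hf, this]; omega
  · rw [if_neg hf]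
    by_cases hq : i < q
    · rw [Nat.div_eq_of_lt hq, Nat.mod_eq_of_lt (by omega)]; omega
    · have : i / q = 1 := by
        rw [Nat.div_eq_iff (by omega)]; omega
      rw [this, Nat.mod_eq_sub_mod (by omega), Nat.mod_eq_of_lt (by omega)]; omega

theorem shift2_iter_le {ℓ i : ℕ} (hl : 1 ≤ ℓ) (hi : i ≤ 2 ^ ℓ - 1) (k : ℕ) :
    (shift2 ℓ)^[k] i ≤ 2 ^ ℓ - 1 := by
  induction k with
  | zero => simpa
  | succ k ih =>
    rw [Function.iterate_succ_apply']
    exact (shift2_spec hl ih).2.1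

/-- top digit of the `k`-th shift -/
def dg (ℓ k u : ℕ) : ℕ := (shift2 ℓ)^[k] u / 2 ^ (ℓ - 1)

theorem shift2_formula {ℓ u : ℕ} (hl : 1 ≤ ℓ) (hu : u ≤ 2 ^ ℓ - 1) (k : ℕ) (hk : k ≤ ℓ) :
    (shift2 ℓ)^[k] u = 2 ^ k * (u % 2 ^ (ℓ - k)) + u / 2 ^ (ℓ - k) ∧
    (k < ℓ → dg ℓ k u = u / 2 ^ (ℓ - 1 - k) % 2) := by
  have hlt : u < 2 ^ ℓ := by have : 1 ≤ 2 ^ ℓ := Nat.one_le_two_pow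
                             omega
  have key : ∀ k, k < ℓ → (shift2 ℓ)^[k] u = 2 ^ k * (u % 2 ^ (ℓ - k)) + u / 2 ^ (ℓ - k) →
      dg ℓ k u = u / 2 ^ (ℓ - 1 - k) % 2 := by
    intro k hk h
    unfold dg
    rw [h]
    have e1 : ℓ - k = (ℓ - 1 - k) + 1 := by omega
    have e2 : 2 ^ (ℓ - 1) = 2 ^ k * 2 ^ (ℓ - 1 - k) := by rw [← pow_add]; congr 1; omega
    have hq : u / 2 ^ (ℓ - k) < 2 ^ k := by
      apply Nat.div_lt_of_lt_mul; rw [← pow_add]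
      rwa [show ℓ - k + k = ℓ by omega]
    rw [e2, ← Nat.div_div_eq_div_mul, Nat.mul_add_div (by positivity), Nat.div_eq_of_lt hq, e1,
      pow_succ, add_zero, Nat.mod_mul_right_div_self]
  have form : ∀ k, k ≤ ℓ →
      (shift2 ℓ)^[k] u = 2 ^ k * (u % 2 ^ (ℓ - k)) + u / 2 ^ (ℓ - k) := by
    intro k hk
    induction k with
    | zero => simp [Nat.mod_eq_of_lt hlt, Nat.div_eq_of_lt hlt]
    | succ k ih =>
      have ih := ih (by omega)
      have hd := key k (by omega) ih
      have hs := (shift2_spec hl (shift2_iter_le hl hu k)).1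
      rw [Function.iterate_succ_apply']
      unfold dg at hd
      rw [hd, ih] at hs
      rw [show ℓ - 1 - k = ℓ - (k + 1) by omega] at hs
      have e1 : ℓ - k = (ℓ - (k + 1)) + 1 := by omega
      have e2 : 2 ^ ℓ = 2 ^ (k + 1) * 2 ^ (ℓ - (k + 1)) := by
        rw [← pow_add]; congr 1; omega
      have h1 : 1 ≤ 2 ^ (k + 1) * 2 ^ (ℓ - (k + 1)) := by rw [← e2]; exact Nat.one_le_two_pow
      rw [e2, e1, pow_succ 2 (ℓ - (k + 1)), ← Nat.div_div_eq_div_mul, Nat.mod_mul] at hs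
      rw [ih, e1, pow_succ 2 (ℓ - (k + 1)), ← Nat.div_div_eq_div_mul, Nat.mod_mul]
      generalize shift2 ℓ _ = X at *
      have hdm := Nat.div_add_mod (u / 2 ^ (ℓ - (k + 1))) 2
      generalize u / 2 ^ (ℓ - (k + 1)) / 2 = y at *
      generalize hz : u / 2 ^ (ℓ - (k + 1)) % 2 = z at *
      zify [h1] at *
      rw [pow_succ] at *
      linear_combination hs + hdm
  exact ⟨form k hk, fun h => key k h (form k hk)⟩

theorem shift2_period {ℓ u : ℕ} (hl : 1 ≤ ℓ) (hu : u ≤ 2 ^ ℓ - 1) : (shift2 ℓ)^[ℓ] u = u := by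
  rw [(shift2_formula hl hu ℓ le_rfl).1]; simp [Nat.mod_one]

theorem s2_eq (ℓ u : ℕ) (hu : u < 2 ^ ℓ) :
    s2 u = ∑ k ∈ Finset.range ℓ, u / 2 ^ k % 2 := by
  induction ℓ generalizing u with
  | zero => have : u = 0 := by simpa using hu
            subst this; simp [s2]
  | succ l ih =>
    rw [Finset.sum_range_succ']
    have h2 : u / 2 < 2 ^ l := by rw [pow_succ] at hu; omega
    have := ih (u / 2) h2
    simp only [Nat.div_div_eq_div_mul] at this
    rcases Nat.eq_zero_or_pos u with h | h
    · subst h; simp [s2]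
    · have e : s2 u = u % 2 + s2 (u / 2) := by
        unfold s2
        rw [Nat.digits_def' (by norm_num) h]; simp
      rw [e, this]
      simp only [pow_succ', pow_zero, Nat.div_one]
      ring

theorem bin_eq (ℓ u : ℕ) (hu : u < 2 ^ ℓ) :
    u = ∑ k ∈ Finset.range ℓ, u / 2 ^ k % 2 * 2 ^ k := by
  induction ℓ generalizing u with
  | zero => simpa using hu
  | succ l ih =>
    rw [Finset.sum_range_succ']
    have h2 : u / 2 < 2 ^ l := by rw [pow_succ] at hu; omega
    have := ih (u / 2) h2
    simp only [Nat.div_div_eq_div_mul] at this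
    have e : ∑ k ∈ Finset.range l, u / 2 ^ (k + 1) % 2 * 2 ^ (k + 1) = 2 * (u / 2) := by
      conv_rhs => rw [this]
      rw [Finset.mul_sum]
      refine Finset.sum_congr rfl fun k _ => ?_
      rw [pow_succ']; ring
    rw [e]; simp; omega

theorem s2_dg {ℓ u : ℕ} (hl : 1 ≤ ℓ) (hu : u ≤ 2 ^ ℓ - 1) :
    s2 u = ∑ k ∈ Finset.range ℓ, dg ℓ k u := by
  have : 1 ≤ 2 ^ ℓ := Nat.one_le_two_pow
  rw [s2_eq ℓ u (by omega), ← Finset.sum_range_reflect]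
  refine Finset.sum_congr rfl fun k hk => ?_
  have hk := Finset.mem_range.1 hk
  rw [(shift2_formula hl hu k hk.le).2 hk]

theorem bin_dg {ℓ u : ℕ} (hl : 1 ≤ ℓ) (hu : u ≤ 2 ^ ℓ - 1) :
    u = ∑ k ∈ Finset.range ℓ, dg ℓ k u * 2 ^ (ℓ - 1 - k) := by
  have : 1 ≤ 2 ^ ℓ := Nat.one_le_two_pow
  conv_lhs => rw [bin_eq ℓ u (by omega), ← Finset.sum_range_reflect]
  refine Finset.sum_congr rfl fun k hk => ?_
  have hk := Finset.mem_range.1 hk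
  rw [(shift2_formula hl hu k hk.le).2 hk]

theorem dg_le {ℓ u : ℕ} (hl : 1 ≤ ℓ) (hu : u ≤ 2 ^ ℓ - 1) (k : ℕ) : dg ℓ k u ≤ 1 :=
  (shift2_spec hl (shift2_iter_le hl hu k)).2.2

/-- number of digits used at step `k` -/
def cnt (D : Finset ℕ) (ℓ : ℕ) (U : ℕ → ℕ) (k : ℕ) : ℕ := ∑ d ∈ D, dg ℓ k (U d)

/-- amount subtracted at step `k` -/
def amt (D : Finset ℕ) (ℓ : ℕ) (U : ℕ → ℕ) (k : ℕ) : ℕ := ∑ d ∈ D, d * dg ℓ k (U d)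

theorem sol_spec {D : Finset ℕ} {ℓ : ℕ} {U : ℕ → ℕ} (h : IsSolution D ℓ U) (hl2 : 2 ≤ ℓ) (k : ℕ) :
    ∑ d ∈ D, d * (shift2 ℓ)^[k] (U d) = (2 ^ ℓ - 1) * supportMap D ℓ U k ∧
    supportMap D ℓ U (k + 1) + amt D ℓ U k = 2 * supportMap D ℓ U k ∧
    supportMap D ℓ U (k + ℓ) = supportMap D ℓ U k ∧
    0 < supportMap D ℓ U k := by
  have hM : 0 < 2 ^ ℓ - 1 := by
    have : 1 < 2 ^ ℓ := Nat.one_lt_two_pow (by omega)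
    omega
  have hrec : ∀ k, ∑ d ∈ D, d * (shift2 ℓ)^[k + 1] (U d) + (2 ^ ℓ - 1) * amt D ℓ U k =
      2 * ∑ d ∈ D, d * (shift2 ℓ)^[k] (U d) := by
    intro k
    unfold amt
    rw [Finset.mul_sum, Finset.mul_sum, ← Finset.sum_add_distrib]
    refine Finset.sum_congr rfl fun d _ => ?_
    have := (shift2_spec h.len_pos (shift2_iter_le h.len_pos (h.bounded d) k)).1
    rw [Function.iterate_succ_apply']
    unfold dg
    linear_combination d * this
  have hdvd : ∀ k, (2 ^ ℓ - 1) ∣ ∑ d ∈ D, d * (shift2 ℓ)^[k] (U d) := by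
    intro k
    induction k with
    | zero => simpa using h.dvd
    | succ k ih =>
      have h1 := hrec k
      rw [← Nat.dvd_add_left (Dvd.intro _ rfl), h1]
      exact Dvd.dvd.mul_left ih 2
  have hT : ∀ k, ∑ d ∈ D, d * (shift2 ℓ)^[k] (U d) = (2 ^ ℓ - 1) * supportMap D ℓ U k := by
    intro k
    unfold supportMap
    rw [Nat.mul_div_cancel' (hdvd k)]
  have hφ : ∀ k, supportMap D ℓ U (k + 1) + amt D ℓ U k = 2 * supportMap D ℓ U k := by
    intro k
    have := hrec k
    rw [hT, hT] at this
    apply Nat.eq_of_mul_eq_mul_left hM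
    linear_combination this
  have hper : ∀ k, supportMap D ℓ U (k + ℓ) = supportMap D ℓ U k := by
    intro k
    unfold supportMap
    congr 1
    refine Finset.sum_congr rfl fun d _ => ?_
    rw [Function.iterate_add_apply, shift2_period h.len_pos (h.bounded d)]
  have hpos0 : 0 < supportMap D ℓ U 0 := by
    have := hT 0
    have hp := h.pos
    simp only [Function.iterate_zero, id] at this
    rw [this] at hp
    exact Nat.pos_of_mul_pos_left hp
  refine ⟨hT k, hφ k, hper k, ?_⟩
  by_contra hc
  have hz : ∀ j, supportMap D ℓ U (k + j) = 0 := by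
    intro j
    induction j with
    | zero => simpa using hc
    | succ j ih => have := hφ (k + j)
                   rw [ih] at this
                   rw [← add_assoc]; omega
  have hm : ∀ j, supportMap D ℓ U (j * ℓ) = supportMap D ℓ U 0 := by
    intro j
    induction j with
    | zero => simp
    | succ j ih => rw [add_mul, one_mul, hper, ih]
  have h1 := hz (k * ℓ - k)
  rw [show k + (k * ℓ - k) = k * ℓ by have : k ≤ k * ℓ := Nat.le_mul_of_pos_right k h.len_pos
                                      omega, hm] at h1
  omega

theorem log_step1 {n m r e x : ℕ} (hn : 20 ≤ n) (hr : 0 < r) (hx : r + e = x)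
    (hub : e ≤ m * (2 ^ (n + 1) - 3)) (hpar : e % 2 = m % 2) (hev : x % 2 = 0) :
    (Nat.log 2 x : ℤ) - Nat.log 2 r - (n - 1) * m ≤
      (if r = 1 then 1 else 0) + (if r = 3 then 1 else 0)
        - 2 * (if (2 ≤ m ∨ (m = 1 ∧ 16 ≤ r)) then 1 else 0) := by
  have hbig : 2 ^ 20 ≤ 2 ^ n := Nat.pow_le_pow_right (by norm_num) hn
  have hp1 : 2 ^ (n + 1) = 2 * 2 ^ n := by ring
  have hp2 : 2 ^ (n + 2) = 4 * 2 ^ n := by ring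
  rcases Nat.lt_or_ge m 2 with hm | hm
  · interval_cases m
    · have : e = 0 := by omega
      subst this
      have : r = x := by omega
      subst this
      have h1 : r ≠ 1 := by omega
      have h3 : r ≠ 3 := by omega
      simp [h1, h3]
    · rcases Nat.lt_or_ge r 16 with h16 | h16
      · have hl2 : Nat.log 2 x < n + 2 := Nat.log_lt_of_lt_pow (by omega) (by omega)
        have hb : ¬ (2 ≤ 1 ∨ (1 = 1 ∧ 16 ≤ r)) := by omega
        rw [if_neg hb]
        by_cases h1 : r = 1
        · subst h1
          have hl3 : Nat.log 2 x < n + 1 := Nat.log_lt_of_lt_pow (by omega) (by omega)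
          simp; omega
        · by_cases h3 : r = 3
          · subst h3
            have : Nat.log 2 3 = 1 := by simp [Nat.log_eq_iff]
            rw [this]; simp; omega
          · have : 2 ≤ Nat.log 2 r := Nat.le_log_of_pow_le (by norm_num) (by omega)
            rw [if_neg h1, if_neg h3]; push_cast; omega
      · have hb : (2 ≤ 1 ∨ (1 = 1 ∧ 16 ≤ r)) := by omega
        rw [if_pos hb, if_neg (by omega), if_neg (by omega)]
        rcases Nat.lt_or_ge r (2 ^ (n + 1)) with hc | hc
        · have hl2 : Nat.log 2 x < n + 2 := Nat.log_lt_of_lt_pow (by omega) (by omega)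
          have : 4 ≤ Nat.log 2 r := Nat.le_log_of_pow_le (by norm_num) (by omega)
          push_cast; omega
        · have := Nat.lt_pow_succ_log_self (b := 2) (by norm_num) r
          have hl2 : Nat.log 2 x < Nat.log 2 r + 1 + 1 :=
            Nat.log_lt_of_lt_pow (by omega) (by rw [pow_succ]; omega)
          push_cast; omega
  · rw [if_pos (Or.inl hm)]
    have h1 := Nat.lt_pow_succ_log_self (b := 2) (by norm_num) r
    have hmlt : m ≤ 2 ^ (m - 1) := by
      have := Nat.lt_two_pow_self (n := m - 1)
      omega
    have h2 : e + 1 ≤ 2 ^ (m - 1) * 2 ^ (n + 1) := by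
      have : m * (2 ^ (n + 1) - 3) + 1 ≤ m * 2 ^ (n + 1) := by
        obtain ⟨t, ht⟩ : ∃ t, 2 ^ (n + 1) = t + 3 := ⟨2 ^ (n + 1) - 3, by omega⟩
        rw [ht]; simp only [Nat.add_sub_cancel]; nlinarith
      calc e + 1 ≤ m * 2 ^ (n + 1) := by omega
        _ ≤ _ := Nat.mul_le_mul_right _ hmlt
    have h3 : x < 2 ^ (Nat.log 2 r + 1 + (m - 1) + (n + 1)) := by
      calc x ≤ r * (e + 1) := by nlinarith
        _ ≤ r * (2 ^ (m - 1) * 2 ^ (n + 1)) := Nat.mul_le_mul_left _ h2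
        _ < 2 ^ (Nat.log 2 r + 1) * (2 ^ (m - 1) * 2 ^ (n + 1)) :=
            Nat.mul_lt_mul_of_pos_right h1 (by positivity)
        _ = _ := by rw [pow_add _ _ (n + 1), pow_add _ _ (m - 1)]; ring
    have h4 := Nat.log_lt_of_lt_pow (by omega) h3
    have h5 : (Nat.log 2 x : ℤ) - Nat.log 2 r ≤ m + n := by omega
    have h6 : (m : ℤ) + n - (n - 1) * m ≤ -2 := by
      have : (2 : ℤ) ≤ m := by exact_mod_cast hm
      have : (20 : ℤ) ≤ n := by exact_mod_cast hn
      nlinarith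
    have h7 : (0 : ℤ) ≤ (if r = 1 then 1 else 0) := by split_ifs <;> norm_num
    have h8 : (0 : ℤ) ≤ (if r = 3 then 1 else 0) := by split_ifs <;> norm_num
    linarith

structure Cyc (n ℓ w : ℕ) (φ m e : ℕ → ℕ) : Prop where
  hn : 20 ≤ n
  hl : 1 ≤ ℓ
  rec' : ∀ k, φ (k + 1) + e k = 2 * φ k
  pos : ∀ k, 0 < φ k
  perφ : ∀ k, φ (k + ℓ) = φ k
  perm : ∀ k, m (k + ℓ) = m k
  ub : ∀ k, e k ≤ m k * (2 ^ (n + 1) - 3)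
  lb : ∀ k, m k ≤ e k
  par : ∀ k, e k % 2 = m k % 2
  sum : ∑ k ∈ Finset.range ℓ, m k = w
  inj : ∀ j k, φ j = φ k → j ≡ k [MOD ℓ]
  lo : 2 * ℓ < (2 * n - 1) * w
  hi : (n - 1) * w < ℓ

namespace Cyc

variable {n ℓ w : ℕ} {φ m e : ℕ → ℕ}

theorem sum_shift (h : Cyc n ℓ w φ m e) (k0 : ℕ) : ∑ k ∈ Finset.range ℓ, m (k0 + k) = w := by
  induction k0 with
  | zero => simpa using h.sum
  | succ k0 ih =>
    obtain ⟨l, rfl⟩ : ∃ l, ℓ = l + 1 := ⟨ℓ - 1, by have := h.hl; omega⟩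
    rw [Finset.sum_range_succ'] at ih
    rw [Finset.sum_range_succ]
    have := h.perm k0
    rw [show k0 + 1 + l = k0 + (l + 1) by ring, this, ← ih, add_zero]
    congr 1
    refine Finset.sum_congr rfl fun k _ => ?_
    congr 1; ring

theorem shift (h : Cyc n ℓ w φ m e) (k0 : ℕ) :
    Cyc n ℓ w (fun k => φ (k0 + k)) (fun k => m (k0 + k)) (fun k => e (k0 + k)) where
  hn := h.hn
  hl := h.hl
  rec' k := h.rec' (k0 + k)
  pos k := h.pos _
  perφ k := by rw [← add_assoc]; exact h.perφ (k0 + k)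
  perm k := by rw [← add_assoc]; exact h.perm (k0 + k)
  ub k := h.ub _
  lb k := h.lb _
  par k := h.par _
  sum := h.sum_shift k0
  inj j k hjk := Nat.ModEq.add_left_cancel' k0 (h.inj _ _ hjk)
  lo := h.lo
  hi := h.hi

theorem ind_le (h : Cyc n ℓ w φ m e) (a t : ℕ) :
    ∑ k ∈ Finset.range ℓ, (if φ (k + t) = a then (1 : ℤ) else 0) ≤ 1 := by
  rw [← Finset.sum_filter, Finset.sum_const, nsmul_eq_mul, mul_one]
  norm_cast
  rw [Finset.card_le_one]
  intro i hi j hj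
  simp only [Finset.mem_filter, Finset.mem_range] at hi hj
  have := Nat.ModEq.add_right_cancel' t (h.inj _ _ (hi.2.trans hj.2.symm))
  exact this.eq_of_lt_of_lt hi.1 hj.1

/-- excess -/
def cc (n : ℕ) (φ m : ℕ → ℕ) (k : ℕ) : ℤ :=
  (Nat.log 2 (2 * φ k) : ℤ) - Nat.log 2 (φ (k + 1)) - (n - 1) * m k

theorem sum_cc (h : Cyc n ℓ w φ m e) :
    ∑ k ∈ Finset.range ℓ, cc n φ m k = ℓ - (n - 1) * w := by
  have h1 : ∀ k, cc n φ m k =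
      1 - ((Nat.log 2 (φ (k + 1)) : ℤ) - Nat.log 2 (φ k)) - (n - 1) * m k := by
    intro k
    unfold cc
    rw [mul_comm 2, Nat.log_mul_base (by norm_num) (h.pos k).ne']
    push_cast; ring
  simp only [h1]
  rw [Finset.sum_sub_distrib, Finset.sum_sub_distrib,
    Finset.sum_range_sub (fun k => (Nat.log 2 (φ k) : ℤ)), ← Finset.mul_sum, ← Nat.cast_sum, h.sum]
  have := h.perφ 0
  rw [zero_add] at this
  rw [this]; simp

theorem exc (h : Cyc n ℓ w φ m e) : 1 ≤ (ℓ : ℤ) - (n - 1) * w ∧ 2 * ((ℓ : ℤ) - (n - 1) * w) < w := by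
  have h1 := h.lo
  have h2 := h.hi
  have hn := h.hn
  zify [show 1 ≤ 2 * n by omega, show 1 ≤ n by omega] at h1 h2
  constructor
  · linarith
  · linarith

theorem not_bad (h : Cyc n ℓ w φ m e) : ∀ k < ℓ, ¬ (2 ≤ m k ∨ (m k = 1 ∧ 16 ≤ φ (k + 1))) := by
  intro k hk hb
  have hs : ∑ k ∈ Finset.range ℓ, cc n φ m k ≤ ∑ k ∈ Finset.range ℓ,
      ((if φ (k + 1) = 1 then 1 else 0) + (if φ (k + 1) = 3 then 1 else 0)
        - 2 * (if (2 ≤ m k ∨ (m k = 1 ∧ 16 ≤ φ (k + 1))) then 1 else 0) : ℤ) :=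
    Finset.sum_le_sum fun k _ => log_step1 h.hn (h.pos _) (h.rec' k) (h.ub k) (h.par k) (by omega)
  rw [h.sum_cc, Finset.sum_sub_distrib, Finset.sum_add_distrib, ← Finset.mul_sum] at hs
  have h1 := h.ind_le 1 1
  have h3 := h.ind_le 3 1
  have hge : (1 : ℤ) ≤ ∑ k ∈ Finset.range ℓ,
      (if (2 ≤ m k ∨ (m k = 1 ∧ 16 ≤ φ (k + 1))) then 1 else 0) := by
    have := Finset.single_le_sum (f := fun k =>
      (if (2 ≤ m k ∨ (m k = 1 ∧ 16 ≤ φ (k + 1))) then (1 : ℤ) else 0))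
      (fun i _ => by split_ifs <;> norm_num) (Finset.mem_range.2 hk)
    simpa only [if_pos hb] using this
  have := h.exc.1
  linarith

theorem small (h : Cyc n ℓ w φ m e) (k : ℕ) : m k = 0 ∨ (m k = 1 ∧ φ (k + 1) < 16) := by
  have := (h.shift k).not_bad 0 (by have := h.hl; omega)
  simp only [add_zero] at this
  have e : k + (0 + 1) = k + 1 := by ring
  rw [e] at this
  omega

theorem step0 (h : Cyc n ℓ w φ m e) {k : ℕ} (hk : m k = 0) : φ (k + 1) = 2 * φ k ∧ e k = 0 := by
  have h1 := h.ub k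
  rw [hk] at h1
  have := h.rec' k
  omega

theorem step1 (h : Cyc n ℓ w φ m e) {k : ℕ} (hk : m k = 1) :
    φ (k + 1) % 2 = 1 ∧ e k ≤ 2 ^ (n + 1) - 3 := by
  have h1 := h.ub k
  have h2 := h.par k
  rw [hk] at h1 h2
  have := h.rec' k
  omega

theorem exists_event (h : Cyc n ℓ w φ m e) : ∃ k, m k = 1 := by
  by_contra hc
  push Not at hc
  have : ∑ k ∈ Finset.range ℓ, m k = 0 := by
    refine Finset.sum_eq_zero fun k _ => ?_
    rcases h.small k with h1 | h1
    · exact h1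
    · exact absurd h1.1 (hc k)
  rw [h.sum] at this
  have h2 := h.lo
  rw [this] at h2
  omega

theorem perφ' (h : Cyc n ℓ w φ m e) (k j : ℕ) : φ (k + j * ℓ) = φ k := by
  induction j with
  | zero => simp
  | succ j ih => rw [add_mul, one_mul, ← add_assoc, h.perφ, ih]

theorem form (h : Cyc n ℓ w φ m e) (k : ℕ) : ∃ s r, r % 2 = 1 ∧ r < 16 ∧ φ k = 2 ^ s * r := by
  obtain ⟨k0, hk0⟩ := h.exists_event
  have hall : ∀ j, ∃ s r, r % 2 = 1 ∧ r < 16 ∧ φ (k0 + 1 + j) = 2 ^ s * r := by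
    have hev : ∀ k, m k = 1 → ∃ s r, r % 2 = 1 ∧ r < 16 ∧ φ (k + 1) = 2 ^ s * r := by
      intro k hk
      refine ⟨0, φ (k + 1), (h.step1 hk).1, ?_, by simp⟩
      rcases h.small k with h1 | h1 <;> omega
    intro j
    induction j with
    | zero => exact hev k0 hk0
    | succ j ih =>
      rcases h.small (k0 + 1 + j) with h1 | h1
      · obtain ⟨s, r, h2, h3, h4⟩ := ih
        refine ⟨s + 1, r, h2, h3, ?_⟩
        rw [← add_assoc, (h.step0 h1).1, h4]; ring
      · exact hev _ h1.1
  have hle : k0 + 1 ≤ k + (k0 + 1) * ℓ := by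
    have := Nat.le_mul_of_pos_right (k0 + 1) h.hl
    omega
  have := hall (k + (k0 + 1) * ℓ - (k0 + 1))
  rw [show k0 + 1 + (k + (k0 + 1) * ℓ - (k0 + 1)) = k + (k0 + 1) * ℓ by omega, h.perφ'] at this
  exact this

theorem log_event (h : Cyc n ℓ w φ m e) {k : ℕ} (hk : m k = 1) :
    φ k = 2 ^ n ∨ Nat.log 2 (2 * φ k) ≤ n := by
  have hn := h.hn
  have h1 := h.step1 hk
  have h2 := h.rec' k
  have h3 : φ (k + 1) < 16 := by rcases h.small k with h1 | h1 <;> omega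
  have hp1 : 2 ^ (n + 1) = 2 * 2 ^ n := by ring
  by_cases hlt : 2 * φ k < 2 ^ (n + 1)
  · right
    have := Nat.log_lt_of_lt_pow (by have := h.pos k; omega) hlt
    omega
  · left
    obtain ⟨s, r, hr, hr2, hf⟩ := h.form k
    have hs : n - 4 ≤ s := by
      by_contra hc
      have : 2 ^ s ≤ 2 ^ (n - 5) := Nat.pow_le_pow_right (by norm_num) (by omega)
      have e5 : 2 ^ n = 2 ^ (n - 5) * 32 := by
        rw [show (32 : ℕ) = 2 ^ 5 by norm_num, ← pow_add]; congr 1; omega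
      have : 2 ^ s * r ≤ 2 ^ (n - 5) * 16 := Nat.mul_le_mul this hr2.le
      have : 0 < 2 ^ (n - 5) := by positivity
      omega
    have hd : 2 ^ (n - 4) ∣ φ k - 2 ^ n := by
      refine Nat.dvd_sub ?_ (Nat.pow_dvd_pow 2 (by omega))
      rw [hf]
      exact Dvd.dvd.mul_right (Nat.pow_dvd_pow 2 hs) r
    have hb : 2 ^ 16 ≤ 2 ^ (n - 4) := Nat.pow_le_pow_right (by norm_num) (by omega)
    have := Nat.eq_zero_of_dvd_of_lt hd (by omega)
    omega

theorem cc_le (h : Cyc n ℓ w φ m e) (k : ℕ) : cc n φ m k ≤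
    (if m k = 1 ∧ φ (k + 0) = 2 ^ n then 1 else 0) + (if φ (k + 1) = 1 then 1 else 0)
      + ((if φ (k + 1) = 1 then 1 else 0) + (if φ (k + 1) = 3 then 1 else 0) - m k)
      - (if m k = 1 ∧ 8 ≤ φ (k + 1) then 1 else 0) := by
  have h0 : (0 : ℤ) ≤ if m k = 1 ∧ φ (k + 0) = 2 ^ n then 1 else 0 := by split_ifs <;> norm_num
  rcases h.small k with h1 | ⟨h1, h16⟩
  · have h2 := (h.step0 h1).1
    have : cc n φ m k = 0 := by unfold cc; rw [h2, h1]; simp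
    rw [this, h1]
    have h5 : φ (k + 1) ≠ 1 := by omega
    have h6 : φ (k + 1) ≠ 3 := by omega
    rw [if_neg h5, if_neg h6]
    simp
  · have hodd := (h.step1 h1).1
    have hlog : (Nat.log 2 (2 * φ k) : ℤ) ≤ n + (if m k = 1 ∧ φ (k + 0) = 2 ^ n then 1 else 0) := by
      rcases h.log_event h1 with h2 | h2
      · rw [add_zero, if_pos ⟨h1, h2⟩, h2, ← pow_succ', Nat.log_pow (by norm_num)]; simp
      · have : (Nat.log 2 (2 * φ k) : ℤ) ≤ n := by exact_mod_cast h2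
        linarith
    unfold cc
    generalize (if m k = 1 ∧ φ (k + 0) = 2 ^ n then (1 : ℤ) else 0) = z at *
    simp only [h1, true_and, Nat.cast_one]
    generalize (Nat.log 2 (2 * φ k) : ℤ) = y at *
    generalize φ (k + 1) = r at *
    have : (Nat.log 2 r : ℤ) ≥ 1 - (if r = 1 then 1 else 0) - ((if r = 1 then 1 else 0) + (if r = 3 then 1 else 0) - 1) + (if 8 ≤ r then 1 else 0) := by
      interval_cases r <;> first | omega | (simp; done) | (simp; exact Nat.le_log_of_pow_le (by norm_num) (by norm_num))
    linarith

theorem tight (h : Cyc n ℓ w φ m e) : w = 3 ∧ ℓ = 3 * n - 2 ∧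
    (∀ k < ℓ, m k = 1 → φ (k + 1) < 8) ∧ (∃ k < ℓ, m k = 1 ∧ φ k = 2 ^ n) ∧
    (∃ k < ℓ, φ (k + 1) = 3) := by
  have hs := Finset.sum_le_sum (s := Finset.range ℓ) fun k _ => h.cc_le k
  rw [h.sum_cc, Finset.sum_sub_distrib, Finset.sum_add_distrib, Finset.sum_add_distrib,
    Finset.sum_sub_distrib, Finset.sum_add_distrib, ← Nat.cast_sum, h.sum] at hs
  have i1 := h.ind_le 1 1
  have i3 := h.ind_le 3 1
  have i0 : ∑ k ∈ Finset.range ℓ, (if m k = 1 ∧ φ (k + 0) = 2 ^ n then (1 : ℤ) else 0) ≤ 1 := by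
    refine le_trans (Finset.sum_le_sum fun k _ => ?_) (h.ind_le (2 ^ n) 0)
    split_ifs <;> simp_all
  have hB : (0 : ℤ) ≤ ∑ k ∈ Finset.range ℓ, (if m k = 1 ∧ 8 ≤ φ (k + 1) then 1 else 0) :=
    Finset.sum_nonneg fun k _ => by split_ifs <;> norm_num
  obtain ⟨x1, x2⟩ := h.exc
  have hn := h.hn
  have hw : w = 3 := by omega
  subst hw
  refine ⟨rfl, by omega, ?_, ?_, ?_⟩
  · intro k hk hm
    by_contra hc
    have := Finset.single_le_sum (f := fun k => (if m k = 1 ∧ 8 ≤ φ (k + 1) then (1 : ℤ) else 0))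
      (fun i _ => by split_ifs <;> norm_num) (Finset.mem_range.2 hk)
    simp only [if_pos (show m k = 1 ∧ 8 ≤ φ (k + 1) from ⟨hm, by omega⟩)] at this
    omega
  · by_contra hc
    have : ∑ k ∈ Finset.range ℓ, (if m k = 1 ∧ φ (k + 0) = 2 ^ n then (1 : ℤ) else 0) = 0 :=
      Finset.sum_eq_zero fun k hk => if_neg fun h1 => hc ⟨k, Finset.mem_range.1 hk, h1⟩
    omega
  · by_contra hc
    have : ∑ k ∈ Finset.range ℓ, (if φ (k + 1) = 3 then (1 : ℤ) else 0) = 0 :=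
      Finset.sum_eq_zero fun k hk => if_neg fun h1 => hc ⟨k, Finset.mem_range.1 hk, h1⟩
    omega

theorem odd_event (h : Cyc n ℓ w φ m e) {k : ℕ} (hk : φ (k + 1) % 2 = 1) : m k = 1 := by
  rcases h.small k with h1 | h1
  · have := h.step0 h1; omega
  · exact h1.1

theorem run (h : Cyc n ℓ w φ m e) (k j : ℕ) (hz : ∀ i < j, m (k + i) = 0) :
    φ (k + j) = 2 ^ j * φ k := by
  induction j with
  | zero => simp
  | succ j ih =>
    rw [← add_assoc, (h.step0 (hz j (by omega))).1, ih fun i hi => hz i (by omega), pow_succ]; ring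

theorem start (h : Cyc n ℓ w φ m e) : ∃ k0, φ k0 = 1 ∧ (∀ j < n, m (k0 + j) = 0) ∧
    m (k0 + n) = 1 := by
  obtain ⟨hw, hl, -, ⟨k1, hk1, hm1, hp1⟩, -⟩ := h.tight
  have hn := h.hn
  have hb : ∀ j ≤ n, φ (k1 + ℓ - j) = 2 ^ (n - j) ∧ (1 ≤ j → m (k1 + ℓ - j) = 0) := by
    intro j
    induction j with
    | zero => intro _; simpa [h.perφ] using hp1
    | succ j ih =>
      intro hj
      have ih := (ih (by omega)).1
      have e1 : k1 + ℓ - j = (k1 + ℓ - (j + 1)) + 1 := by omega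
      have e2 : n - j = (n - (j + 1)) + 1 := by omega
      rw [e1, e2, pow_succ] at ih
      rcases h.small (k1 + ℓ - (j + 1)) with h1 | h1
      · have := (h.step0 h1).1
        exact ⟨by omega, fun _ => h1⟩
      · have := (h.step1 h1.1).1
        omega
  refine ⟨k1 + ℓ - n, ?_, ?_, ?_⟩
  · simpa using (hb n le_rfl).1
  · intro j hj
    have := (hb (n - j) (by omega)).2 (by omega)
    rwa [show k1 + ℓ - (n - j) = k1 + ℓ - n + j by omega] at this
  · rw [show k1 + ℓ - n + n = k1 + ℓ by omega, h.perm, hm1]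

theorem final0 (h : Cyc n ℓ w φ m e) (h0 : φ 0 = 1) (hz : ∀ j < n, m j = 0) (hmn : m n = 1) :
    ∃ a b p, ((a = 3 ∧ (b = 5 ∨ b = 7) ∧ p = 2 * n - 1) ∨
      (b = 3 ∧ (a = 5 ∨ a = 7) ∧ p = 2 * n - 2)) ∧
      (∀ j < ℓ, m j = if j = n ∨ j = p ∨ j = ℓ - 1 then 1 else 0) ∧
      e n = 2 ^ (n + 1) - a ∧ e p = a * 2 ^ (p - n) - b ∧ e (ℓ - 1) = b * 2 ^ (ℓ - 1 - p) - 1 := by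
  obtain ⟨hw, hl, h8, -, ⟨k3, hk3, hr3⟩⟩ := h.tight
  have hn := h.hn
  have hφl : φ (ℓ - 1 + 1) = 1 := by
    rw [show ℓ - 1 + 1 = 0 + ℓ by omega, h.perφ, h0]
  have hml : m (ℓ - 1) = 1 := h.odd_event (by rw [hφl])
  -- the event set
  have hcard : ((Finset.range ℓ).filter fun k => m k = 1).card = 3 := by
    rw [Finset.card_filter, ← hw, ← h.sum]
    refine Finset.sum_congr rfl fun k _ => ?_
    rcases h.small k with h1 | h1
    · simp [h1]
    · simp [h1.1]
  have hcard2 : ((((Finset.range ℓ).filter fun k => m k = 1).erase n).erase (ℓ - 1)).card = 1 := by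
    rw [Finset.card_erase_of_mem, Finset.card_erase_of_mem, hcard]
    · simp [hmn]; omega
    · simp [hml]; omega
  obtain ⟨p, hp⟩ := Finset.card_eq_one.1 hcard2
  have hiff : ∀ j, (j ≠ ℓ - 1 ∧ j ≠ n ∧ j < ℓ ∧ m j = 1) ↔ j = p := by
    intro j
    have := Finset.ext_iff.1 hp j
    simpa using this
  obtain ⟨p1, p2, p3, hmp⟩ := (hiff p).2 rfl
  have hnp : n < p := by
    by_contra hc
    have := hz p (by omega)
    omega
  have hm : ∀ j < ℓ, m j = if j = n ∨ j = p ∨ j = ℓ - 1 then 1 else 0 := by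
    intro j hj
    split_ifs with hc
    · rcases hc with rfl | rfl | rfl <;> assumption
    · rcases h.small j with h1 | h1
      · exact h1
      · have := (hiff j).1 ⟨by omega, by omega, hj, h1.1⟩
        omega
  have hneq : ∀ i j, i < ℓ → j < ℓ → i ≠ j → φ i ≠ φ j := fun i j hi hj hij hc =>
    hij ((h.inj _ _ hc).eq_of_lt_of_lt hi hj)
  have ha1 := h8 n (by omega) hmn
  have ha2 := (h.step1 hmn).1
  have ha3 := hneq 0 (n + 1) (by omega) (by omega) (by omega)
  have hb1 := h8 p (by omega) hmp
  have hb2 := (h.step1 hmp).1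
  have hb3 := hneq 0 (p + 1) (by omega) (by omega) (by omega)
  have hab := hneq (n + 1) (p + 1) (by omega) (by omega) (by omega)
  have h3 : φ (n + 1) = 3 ∨ φ (p + 1) = 3 := by
    have h31 := h.odd_event (k := k3) (by rw [hr3])
    have h32 := hm k3 hk3
    rw [h31] at h32
    split_ifs at h32 with hc
    rcases hc with rfl | rfl | rfl
    · exact Or.inl hr3
    · exact Or.inr hr3
    · omega
  have hA := h.run 0 n (fun i hi => by simpa using hz i hi)
  have hBr := h.run (n + 1) (p - n - 1) (fun i hi => by rw [hm _ (by omega), if_neg (by omega)])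
  have hC := h.run (p + 1) (ℓ - 1 - p - 1) (fun i hi => by rw [hm _ (by omega), if_neg (by omega)])
  rw [zero_add, h0, mul_one] at hA
  rw [show n + 1 + (p - n - 1) = p by omega] at hBr
  rw [show p + 1 + (ℓ - 1 - p - 1) = ℓ - 1 by omega] at hC
  have rA := h.rec' n
  have rB := h.rec' p
  have rC := h.rec' (ℓ - 1)
  have uB := (h.step1 hmp).2
  have uC := (h.step1 hml).2
  rw [hA, ← pow_succ'] at rA
  rw [hBr, ← mul_assoc, ← pow_succ', show p - n - 1 + 1 = p - n by omega] at rB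
  rw [hC, hφl, ← mul_assoc, ← pow_succ', show ℓ - 1 - p - 1 + 1 = ℓ - 1 - p by omega] at rC
  have hbig : 2 ^ 18 ≤ 2 ^ (n - 2) := Nat.pow_le_pow_right (by norm_num) (by omega)
  have q1 : 2 ^ (n - 1) = 2 * 2 ^ (n - 2) := by rw [← pow_succ']; congr 1; omega
  have q0 : 2 ^ n = 4 * 2 ^ (n - 2) := by
    rw [show (4 : ℕ) = 2 ^ 2 by norm_num, ← pow_add]; congr 1; omega
  have q2 : 2 ^ (n + 1) = 8 * 2 ^ (n - 2) := by
    rw [show (8 : ℕ) = 2 ^ 3 by norm_num, ← pow_add]; congr 1; omega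
  refine ⟨φ (n + 1), φ (p + 1), p, ?_, hm, by omega, by rw [mul_comm]; omega,
    by rw [mul_comm]; omega⟩
  have mono : ∀ c x, c ≤ x → 2 ^ c ≤ 2 ^ x := fun c x hx => Nat.pow_le_pow_right (by norm_num) hx
  by_cases ha : φ (n + 1) = 3
  · left
    have hb : φ (p + 1) = 5 ∨ φ (p + 1) = 7 := by omega
    refine ⟨ha, hb, ?_⟩
    have l1 : p - n < n := by
      by_contra hc
      have := mono n (p - n) (by omega)
      rw [ha] at rB
      omega
    have l2 : ℓ - 1 - p < n - 1 := by
      by_contra hc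
      have := mono (n - 1) (ℓ - 1 - p) (by omega)
      rcases hb with hb | hb <;> rw [hb] at rC <;> omega
    omega
  · right
    have hb : φ (p + 1) = 3 := by omega
    have ha : φ (n + 1) = 5 ∨ φ (n + 1) = 7 := by omega
    refine ⟨hb, ha, ?_⟩
    have l1 : p - n < n - 1 := by
      by_contra hc
      have := mono (n - 1) (p - n) (by omega)
      rcases ha with ha | ha <;> rw [ha] at rB <;> omega
    have l2 : ℓ - 1 - p < n := by
      by_contra hc
      have := mono n (ℓ - 1 - p) (by omega)
      rw [hb] at rC
      omega
    omega

end Cyc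

theorem mem_oddD {n d : ℕ} : d ∈ oddD n ↔ d ≤ 2 ^ (n + 1) - 3 ∧ d % 2 = 1 := by
  unfold oddD oddUpTo
  simp only [Finset.mem_filter, Finset.mem_range]
  omega

theorem dg_period {ℓ u : ℕ} (hl : 1 ≤ ℓ) (hu : u ≤ 2 ^ ℓ - 1) (k : ℕ) :
    dg ℓ (k + ℓ) u = dg ℓ k u := by
  unfold dg
  rw [Function.iterate_add_apply, shift2_period hl hu]

theorem dg_zero (ℓ k : ℕ) : dg ℓ k 0 = 0 := by
  have : (shift2 ℓ)^[k] 0 = 0 := by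
    induction k with
    | zero => rfl
    | succ k ih => rw [Function.iterate_succ_apply', ih]; simp [shift2]
  unfold dg; rw [this]; simp

theorem cyc_of_sol {n ℓ : ℕ} {U : ℕ → ℕ} (hn : 20 ≤ n) (h : IsSolution (oddD n) ℓ U)
    (hirr : IrreducibleSol (oddD n) ℓ U)
    (hlo : 2 * ℓ < (2 * n - 1) * weight (oddD n) U) (hhi : (n - 1) * weight (oddD n) U < ℓ) :
    Cyc n ℓ (weight (oddD n) U) (supportMap (oddD n) ℓ U) (cnt (oddD n) ℓ U)
      (amt (oddD n) ℓ U) := by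
  have hw : 0 < weight (oddD n) U := by
    by_contra hc
    have : weight (oddD n) U = 0 := by omega
    rw [this] at hlo; omega
  have hl2 : 2 ≤ ℓ := by
    have : n - 1 ≤ (n - 1) * weight (oddD n) U := Nat.le_mul_of_pos_right _ hw
    omega
  have hper : Function.Periodic (supportMap (oddD n) ℓ U) ℓ := fun k => (sol_spec h hl2 k).2.2.1
  refine
    { hn := hn
      hl := h.len_pos
      rec' := fun k => (sol_spec h hl2 k).2.1
      pos := fun k => (sol_spec h hl2 k).2.2.2
      perφ := hper
      perm := ?_
      ub := ?_
      lb := ?_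
      par := ?_
      sum := ?_
      inj := ?_
      lo := hlo
      hi := hhi }
  · intro k
    unfold cnt
    exact Finset.sum_congr rfl fun d _ => dg_period h.len_pos (h.bounded d) k
  · intro k
    unfold cnt amt
    rw [Finset.sum_mul]
    refine Finset.sum_le_sum fun d hd => ?_
    rw [mul_comm]
    exact Nat.mul_le_mul_left _ (mem_oddD.1 hd).1
  · intro k
    unfold cnt amt
    refine Finset.sum_le_sum fun d hd => ?_
    have := (mem_oddD.1 hd).2
    exact Nat.le_mul_of_pos_left _ (by omega)
  · intro k
    have : amt (oddD n) ℓ U k = cnt (oddD n) ℓ U k + 2 * ∑ d ∈ oddD n, d / 2 * dg ℓ k (U d) := by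
      unfold cnt amt
      rw [Finset.mul_sum, ← Finset.sum_add_distrib]
      refine Finset.sum_congr rfl fun d hd => ?_
      have := (mem_oddD.1 hd).2
      have e : d = 2 * (d / 2) + 1 := by omega
      generalize d / 2 = y at *
      generalize dg ℓ k (U d) = z at *
      subst e; ring
    omega
  · unfold cnt weight
    rw [Finset.sum_comm]
    exact Finset.sum_congr rfl fun d _ => (s2_dg h.len_pos (h.bounded d)).symm
  · intro j k hjk
    rw [← hper.map_mod_nat j, ← hper.map_mod_nat k] at hjk
    exact hirr (by simpa using Nat.mod_lt _ h.len_pos) (by simpa using Nat.mod_lt _ h.len_pos) hjk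

theorem cnt_zero {D : Finset ℕ} {ℓ : ℕ} {U : ℕ → ℕ} (hU : ∀ d, d ∉ D → U d = 0) {k : ℕ}
    (h : cnt D ℓ U k = 0) (d : ℕ) : dg ℓ k (U d) = 0 := by
  by_cases hd : d ∈ D
  · exact Finset.sum_eq_zero_iff.1 h d hd
  · rw [hU d hd, dg_zero]

theorem cnt_one {D : Finset ℕ} {ℓ : ℕ} {U : ℕ → ℕ} (hU : ∀ d, d ∉ D → U d = 0) {k : ℕ}
    (h : cnt D ℓ U k = 1) (d : ℕ) : dg ℓ k (U d) = if d = amt D ℓ U k then 1 else 0 := by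
  unfold cnt at h
  obtain ⟨d0, hd0, hne⟩ := Finset.exists_ne_zero_of_sum_ne_zero (s := D)
    (f := fun d => dg ℓ k (U d)) (by omega)
  rw [← Finset.add_sum_erase D _ hd0] at h
  have h0 : ∀ d ∈ D, d ≠ d0 → dg ℓ k (U d) = 0 := by
    intro d hd hdd
    have : ∑ x ∈ D.erase d0, dg ℓ k (U x) = 0 := by omega
    exact Finset.sum_eq_zero_iff.1 this d (Finset.mem_erase.2 ⟨hdd, hd⟩)
  have h1 : dg ℓ k (U d0) = 1 := by omega
  have ha : amt D ℓ U k = d0 := by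
    unfold amt
    rw [Finset.sum_eq_single_of_mem d0 hd0, h1, mul_one]
    intro b hb hbd
    rw [h0 b hb hbd, mul_zero]
  rw [ha]
  split_ifs with hc
  · rw [hc, h1]
  · by_cases hd : d ∈ D
    · exact h0 d hd hc
    · rw [hU d hd, dg_zero]

theorem reconstruct {D : Finset ℕ} {ℓ : ℕ} {U : ℕ → ℕ} (h : IsSolution D ℓ U) {k0 n p : ℕ}
    (hnp : n < p) (hpl : p < ℓ - 1)
    (hm : ∀ j < ℓ, cnt D ℓ U (k0 + j) = if j = n ∨ j = p ∨ j = ℓ - 1 then 1 else 0)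
    {d1 d2 d3 : ℕ} (e1 : amt D ℓ U (k0 + n) = d1) (e2 : amt D ℓ U (k0 + p) = d2)
    (e3 : amt D ℓ U (k0 + (ℓ - 1)) = d3) (h12 : d1 ≠ d2) (h13 : d1 ≠ d3) (h23 : d2 ≠ d3) :
    IsShiftOf ℓ U (sol3 d1 (2 ^ (ℓ - 1 - n)) d2 (2 ^ (ℓ - 1 - p)) d3 1) := by
  have key : ∀ d, (shift2 ℓ)^[k0] (U d) = sol3 d1 (2 ^ (ℓ - 1 - n)) d2 (2 ^ (ℓ - 1 - p)) d3 1 d := by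
    intro d
    rw [bin_dg h.len_pos (shift2_iter_le h.len_pos (h.bounded d) k0)]
    have hterm : ∀ j ∈ Finset.range ℓ,
        dg ℓ j ((shift2 ℓ)^[k0] (U d)) * 2 ^ (ℓ - 1 - j) =
          ((if j = n then (if d = d1 then 2 ^ (ℓ - 1 - n) else 0) else 0) +
          (if j = p then (if d = d2 then 2 ^ (ℓ - 1 - p) else 0) else 0)) +
          (if j = ℓ - 1 then (if d = d3 then 1 else 0) else 0) := by
      intro j hj
      have hj := Finset.mem_range.1 hj
      have hdg : dg ℓ j ((shift2 ℓ)^[k0] (U d)) = dg ℓ (k0 + j) (U d) := by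
        unfold dg; rw [← Function.iterate_add_apply, add_comm]
      rw [hdg]
      have hmj := hm j hj
      split_ifs at hmj with hc
      · rw [cnt_one h.supp_sub hmj]
        rcases hc with rfl | rfl | rfl
        · rw [e1, if_neg (by omega : ¬ j = p), if_neg (by omega : ¬ j = ℓ - 1)]; simp
        · rw [e2, if_neg (by omega : ¬ j = n), if_neg (by omega : ¬ j = ℓ - 1)]; simp
        · rw [e3, if_neg (by omega : ¬ ℓ - 1 = n), if_neg (by omega : ¬ ℓ - 1 = p)]; simp
      · rw [cnt_zero h.supp_sub hmj, if_neg (by omega : ¬ j = n), if_neg (by omega : ¬ j = p),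
          if_neg (by omega : ¬ j = ℓ - 1)]
        simp
    rw [Finset.sum_congr rfl hterm, Finset.sum_add_distrib, Finset.sum_add_distrib,
      Finset.sum_ite_eq', Finset.sum_ite_eq', Finset.sum_ite_eq',
      if_pos (Finset.mem_range.2 (by omega)), if_pos (Finset.mem_range.2 (by omega)),
      if_pos (Finset.mem_range.2 (by omega))]
    unfold sol3
    by_cases c1 : d = d1
    · subst c1; simp [h12, h13]
    · by_cases c2 : d = d2
      · subst c2; simp [c1, h23]
      · simp [c1, c2]
  have hper : ∀ j u, u ≤ 2 ^ ℓ - 1 → (shift2 ℓ)^[j * ℓ] u = u := by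
    intro j u hu
    induction j with
    | zero => simp
    | succ j ih => rw [add_mul, one_mul, Function.iterate_add_apply, shift2_period h.len_pos hu, ih]
  refine ⟨k0 * (ℓ - 1), fun d => ?_⟩
  rw [← key, ← Function.iterate_add_apply]
  have : k0 * (ℓ - 1) + k0 = k0 * ℓ := by
    obtain ⟨l, rfl⟩ : ∃ l, ℓ = l + 1 := ⟨ℓ - 1, by omega⟩
    simp; ring
  rw [this, hper _ _ (h.bounded d)]

theorem sum_sol3 {D : Finset ℕ} {d1 d2 d3 x y z : ℕ} (m1 : d1 ∈ D) (m2 : d2 ∈ D) (m3 : d3 ∈ D)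
    (h12 : d1 ≠ d2) (h13 : d1 ≠ d3) (h23 : d2 ≠ d3) (f : ℕ → ℕ → ℕ) (hf : ∀ d, f d 0 = 0) :
    ∑ d ∈ D, f d (sol3 d1 x d2 y d3 z d) = f d1 x + f d2 y + f d3 z := by
  have hterm : ∀ d ∈ D, f d (sol3 d1 x d2 y d3 z d) =
      ((if d = d1 then f d1 x else 0) + (if d = d2 then f d2 y else 0)) +
      (if d = d3 then f d3 z else 0) := by
    intro d _
    unfold sol3
    by_cases c1 : d = d1
    · subst c1; simp [h12, h13]
    · by_cases c2 : d = d2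
      · subst c2; simp [c1, h23]
      · by_cases c3 : d = d3
        · subst c3; simp [c1, c2]
        · simp [c1, c2, c3, hf]
  rw [Finset.sum_congr rfl hterm, Finset.sum_add_distrib, Finset.sum_add_distrib,
      Finset.sum_ite_eq', Finset.sum_ite_eq', Finset.sum_ite_eq', if_pos m1, if_pos m2, if_pos m3]

theorem s2_pow (j : ℕ) : s2 (2 ^ j) = 1 := by
  induction j with
  | zero => simp [s2]
  | succ j ih =>
    unfold s2 at *
    rw [Nat.digits_def' (by norm_num) (by positivity), pow_succ]
    simpa using ih

theorem dg_pow {ℓ q k : ℕ} (hq : q < ℓ) (hk : k < ℓ) :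
    dg ℓ k (2 ^ (ℓ - 1 - q)) = if k = q then 1 else 0 := by
  have hlt : 2 ^ (ℓ - 1 - q) < 2 ^ ℓ := Nat.pow_lt_pow_right (by norm_num) (by omega)
  rw [(shift2_formula (by omega) (by omega) k hk.le).2 hk]
  split_ifs with hc
  · subst hc; rw [Nat.div_self (by positivity)]
  · rcases Nat.lt_or_ge k q with h | h
    · rw [Nat.div_eq_of_lt (Nat.pow_lt_pow_right (by norm_num) (by omega))]
    · rw [Nat.pow_div (by omega) (by norm_num),
        show ℓ - 1 - q - (ℓ - 1 - k) = (k - q - 1) + 1 by omega, pow_succ]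
      simp

theorem odd_part {s t c d : ℕ} (hc : c % 2 = 1) (hd : d % 2 = 1) (h : 2 ^ s * c = 2 ^ t * d) :
    s = t ∧ c = d := by
  induction s generalizing t with
  | zero =>
    cases t with
    | zero => simpa using h
    | succ t => rw [pow_succ, mul_assoc, mul_left_comm] at h; omega
  | succ s ih =>
    cases t with
    | zero => rw [pow_succ, mul_assoc, mul_left_comm] at h; omega
    | succ t =>
      rw [pow_succ, pow_succ, mul_assoc, mul_assoc, mul_left_comm, mul_left_comm (2 ^ t)] at h
      obtain ⟨h1, h2⟩ := ih (t := t) (by omega)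
      exact ⟨by omega, h2⟩

theorem converse {D : Finset ℕ} {ℓ n p a b d1 d2 d3 : ℕ} (hnp : n < p) (hpl : p < ℓ - 1)
    (ha : a % 2 = 1) (hb : b % 2 = 1) (ha1 : a ≠ 1) (hb1 : b ≠ 1) (hab : a ≠ b)
    (e1 : d1 + a = 2 ^ (n + 1)) (e2 : d2 + b = a * 2 ^ (p - n)) (e3 : d3 + 1 = b * 2 ^ (ℓ - 1 - p))
    (m1 : d1 ∈ D) (m2 : d2 ∈ D) (m3 : d3 ∈ D)
    (h12 : d1 ≠ d2) (h13 : d1 ≠ d3) (h23 : d2 ≠ d3) :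
    IsSolution D ℓ (sol3 d1 (2 ^ (ℓ - 1 - n)) d2 (2 ^ (ℓ - 1 - p)) d3 1) ∧
    IrreducibleSol D ℓ (sol3 d1 (2 ^ (ℓ - 1 - n)) d2 (2 ^ (ℓ - 1 - p)) d3 1) ∧
    weight D (sol3 d1 (2 ^ (ℓ - 1 - n)) d2 (2 ^ (ℓ - 1 - p)) d3 1) = 3 := by
  have hM : 1 < 2 ^ ℓ := Nat.one_lt_two_pow (by omega)
  have hsum : ∑ d ∈ D, d * sol3 d1 (2 ^ (ℓ - 1 - n)) d2 (2 ^ (ℓ - 1 - p)) d3 1 d = 2 ^ ℓ - 1 := by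
    rw [sum_sol3 m1 m2 m3 h12 h13 h23 (fun d u => d * u) (fun d => by simp)]
    have p1 : 2 ^ ℓ = 2 ^ (n + 1) * 2 ^ (ℓ - 1 - n) := by rw [← pow_add]; congr 1; omega
    have p2 : 2 ^ (ℓ - 1 - n) = 2 ^ (p - n) * 2 ^ (ℓ - 1 - p) := by
      rw [← pow_add]; congr 1; omega
    have : d1 * 2 ^ (ℓ - 1 - n) + d2 * 2 ^ (ℓ - 1 - p) + d3 * 1 + 1 = 2 ^ ℓ := by
      have q1 : (d1 + a) * 2 ^ (ℓ - 1 - n) = 2 ^ ℓ := by rw [e1, p1]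
      have q2 : (d2 + b) * 2 ^ (ℓ - 1 - p) = a * 2 ^ (ℓ - 1 - n) := by rw [e2, p2]; ring
      zify at *
      linear_combination q1 + q2 + e3
    omega
  have hbd : ∀ d, sol3 d1 (2 ^ (ℓ - 1 - n)) d2 (2 ^ (ℓ - 1 - p)) d3 1 d ≤ 2 ^ ℓ - 1 := by
    intro d
    have t1 : 2 ^ (ℓ - 1 - n) < 2 ^ ℓ := Nat.pow_lt_pow_right (by norm_num) (by omega)
    have t2 : 2 ^ (ℓ - 1 - p) < 2 ^ ℓ := Nat.pow_lt_pow_right (by norm_num) (by omega)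
    unfold sol3
    split_ifs <;> omega
  have hsol : IsSolution D ℓ (sol3 d1 (2 ^ (ℓ - 1 - n)) d2 (2 ^ (ℓ - 1 - p)) d3 1) := by
    refine ⟨by omega, hbd, ?_, by rw [hsum], by rw [hsum]; omega⟩
    intro d hd
    unfold sol3
    rw [if_neg (by rintro rfl; exact hd m1), if_neg (by rintro rfl; exact hd m2),
      if_neg (by rintro rfl; exact hd m3)]
  refine ⟨hsol, ?_, ?_⟩
  · have hamt : ∀ k < ℓ, amt D ℓ (sol3 d1 (2 ^ (ℓ - 1 - n)) d2 (2 ^ (ℓ - 1 - p)) d3 1) k =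
        d1 * (if k = n then 1 else 0) + d2 * (if k = p then 1 else 0)
          + d3 * (if k = ℓ - 1 then 1 else 0) := by
      intro k hk
      unfold amt
      rw [sum_sol3 m1 m2 m3 h12 h13 h23 (fun d u => d * dg ℓ k u) (fun d => by simp [dg_zero])]
      rw [dg_pow (by omega) hk, dg_pow (by omega) hk]
      have := dg_pow (ℓ := ℓ) (q := ℓ - 1) (k := k) (by omega) hk
      rw [show ℓ - 1 - (ℓ - 1) = 0 by omega, pow_zero] at this
      rw [this]
    have h0 : supportMap D ℓ (sol3 d1 (2 ^ (ℓ - 1 - n)) d2 (2 ^ (ℓ - 1 - p)) d3 1) 0 = 1 := by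
      unfold supportMap
      simp only [Function.iterate_zero, id]
      rw [hsum, Nat.div_self (by omega)]
    have hrec := fun k => (sol_spec hsol (by omega) k).2.1
    unfold IrreducibleSol
    generalize supportMap D ℓ (sol3 d1 (2 ^ (ℓ - 1 - n)) d2 (2 ^ (ℓ - 1 - p)) d3 1) = φ at *
    generalize amt D ℓ (sol3 d1 (2 ^ (ℓ - 1 - n)) d2 (2 ^ (ℓ - 1 - p)) d3 1) = e at *
    have hz : ∀ k < ℓ - 1, k ≠ n → k ≠ p → φ (k + 1) = 2 * φ k := by
      intro k hk hkn hkp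
      have h1 := hrec k
      rw [hamt k (by omega), if_neg hkn, if_neg hkp, if_neg (by omega)] at h1
      simpa using h1
    have f1 : ∀ k ≤ n, φ k = 2 ^ k * 1 := by
      intro k
      induction k with
      | zero => intro _; simpa using h0
      | succ k ih => intro hk
                     rw [hz k (by omega) (by omega) (by omega), ih (by omega), pow_succ]; ring
    have f2 : ∀ k, k + n + 1 ≤ p → φ (k + n + 1) = 2 ^ k * a := by
      intro k
      induction k with
      | zero =>
        intro _
        have h1 := hrec n
        rw [hamt n (by omega), if_pos rfl, if_neg (by omega), if_neg (by omega), f1 n le_rfl] at h1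
        rw [pow_succ] at e1
        rw [zero_add, pow_zero]; omega
      | succ k ih =>
        intro hk
        rw [show k + 1 + n + 1 = (k + n + 1) + 1 by ring, hz _ (by omega) (by omega) (by omega),
          ih (by omega), pow_succ]; ring
    have f3 : ∀ k, k + p + 1 < ℓ → φ (k + p + 1) = 2 ^ k * b := by
      intro k
      induction k with
      | zero =>
        intro _
        have h1 := hrec p
        have h2 := f2 (p - n - 1) (by omega)
        rw [show p - n - 1 + n + 1 = p by omega] at h2
        rw [hamt p (by omega), if_pos rfl, if_neg (by omega), if_neg (by omega), h2,
          ← mul_assoc, ← pow_succ', show p - n - 1 + 1 = p - n by omega, mul_comm _ a] at h1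
        rw [zero_add, pow_zero]; omega
      | succ k ih =>
        intro hk
        rw [show k + 1 + p + 1 = (k + p + 1) + 1 by ring, hz _ (by omega) (by omega) (by omega),
          ih (by omega), pow_succ]; ring
    have hform : ∀ k < ℓ, (k ≤ n ∧ φ k = 2 ^ k * 1) ∨
        (n < k ∧ k ≤ p ∧ φ k = 2 ^ (k - n - 1) * a) ∨ (p < k ∧ φ k = 2 ^ (k - p - 1) * b) := by
      intro k hk
      rcases Nat.lt_or_ge n k with hc | hc
      · rcases Nat.lt_or_ge p k with hc2 | hc2
        · right; right
          have := f3 (k - p - 1) (by omega)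
          rw [show k - p - 1 + p + 1 = k by omega] at this
          exact ⟨hc2, this⟩
        · right; left
          have := f2 (k - n - 1) (by omega)
          rw [show k - n - 1 + n + 1 = k by omega] at this
          exact ⟨hc, hc2, this⟩
      · exact Or.inl ⟨hc, f1 k hc⟩
    intro i hi j hj hij
    have hi : i < ℓ := by simpa using hi
    have hj : j < ℓ := by simpa using hj
    rcases hform i hi with ⟨i1, i2⟩ | ⟨i1, i3, i2⟩ | ⟨i1, i2⟩ <;>
    rcases hform j hj with ⟨j1, j2⟩ | ⟨j1, j3, j2⟩ | ⟨j1, j2⟩ <;>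
    · rw [i2, j2] at hij
      have := odd_part (by omega) (by omega) hij
      omega
  · unfold weight
    rw [sum_sol3 m1 m2 m3 h12 h13 h23 (fun _ u => s2 u) (fun d => by simp [s2])]
    have := s2_pow 0
    rw [pow_zero] at this
    rw [s2_pow, s2_pow, this]

/-- For `n` large enough and `D = {i : 1 ≤ i ≤ 2^{n+1} − 3, i odd}`: every irreducible
solution with density strictly between `2/(2n−1)` and `1/(n−1)` has density exactly
`3/(3n−2)` (weight 3, length `3n−2`) and is, up to shift, one of the four listed
three-term solutions (`i ∈ {5,7}`).  Conversely all four are irreducible solutions of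
weight 3 and length `3n−2`. -/
theorem density_three_over_3n_sub_two_solutions :
    ∃ N : ℕ, ∀ n : ℕ, N ≤ n →
      (∀ i ∈ ({5, 7} : Finset ℕ),
        (IsSolution (oddD n) (3 * n - 2)
            (sol3 (2 ^ (n + 1) - 3) (2 ^ (2 * n - 3)) (3 * 2 ^ (n - 1) - i) (2 ^ (n - 2)) (i * 2 ^ (n - 2) - 1) 1) ∧
          IrreducibleSol (oddD n) (3 * n - 2)
            (sol3 (2 ^ (n + 1) - 3) (2 ^ (2 * n - 3)) (3 * 2 ^ (n - 1) - i) (2 ^ (n - 2)) (i * 2 ^ (n - 2) - 1) 1) ∧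
          weight (oddD n)
            (sol3 (2 ^ (n + 1) - 3) (2 ^ (2 * n - 3)) (3 * 2 ^ (n - 1) - i) (2 ^ (n - 2)) (i * 2 ^ (n - 2) - 1) 1) = 3) ∧
        (IsSolution (oddD n) (3 * n - 2)
            (sol3 (2 ^ (n + 1) - i) (2 ^ (2 * n - 3)) (i * 2 ^ (n - 2) - 3) (2 ^ (n - 1)) (3 * 2 ^ (n - 1) - 1) 1) ∧
          IrreducibleSol (oddD n) (3 * n - 2)
            (sol3 (2 ^ (n + 1) - i) (2 ^ (2 * n - 3)) (i * 2 ^ (n - 2) - 3) (2 ^ (n - 1)) (3 * 2 ^ (n - 1) - 1) 1) ∧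
          weight (oddD n)
            (sol3 (2 ^ (n + 1) - i) (2 ^ (2 * n - 3)) (i * 2 ^ (n - 2) - 3) (2 ^ (n - 1)) (3 * 2 ^ (n - 1) - 1) 1) = 3)) ∧
      (∀ ℓ U, IsSolution (oddD n) ℓ U → IrreducibleSol (oddD n) ℓ U →
        2 * ℓ < (2 * n - 1) * weight (oddD n) U →
        (n - 1) * weight (oddD n) U < ℓ →
        weight (oddD n) U = 3 ∧ ℓ = 3 * n - 2 ∧
          ∃ i ∈ ({5, 7} : Finset ℕ),
            IsShiftOf ℓ U
              (sol3 (2 ^ (n + 1) - 3) (2 ^ (2 * n - 3)) (3 * 2 ^ (n - 1) - i) (2 ^ (n - 2)) (i * 2 ^ (n - 2) - 1) 1) ∨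
            IsShiftOf ℓ U
              (sol3 (2 ^ (n + 1) - i) (2 ^ (2 * n - 3)) (i * 2 ^ (n - 2) - 3) (2 ^ (n - 1)) (3 * 2 ^ (n - 1) - 1) 1)) := by
  refine ⟨20, fun n hn => ?_⟩
  have hbig : 2 ^ 18 ≤ 2 ^ (n - 2) := Nat.pow_le_pow_right (by norm_num) (by omega)
  have q1 : 2 ^ (n - 1) = 2 * 2 ^ (n - 2) := by rw [← pow_succ']; congr 1; omega
  have q2 : 2 ^ (n + 1) = 8 * 2 ^ (n - 2) := by
    rw [show (8 : ℕ) = 2 ^ 3 by norm_num, ← pow_add]; congr 1; omega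
  have q3 : 2 ^ (n - 2) % 2 = 0 := by
    rw [show n - 2 = (n - 3) + 1 by omega, pow_succ]; omega
  have x1 : 3 * n - 2 - 1 - n = 2 * n - 3 := by omega
  have x2 : 3 * n - 2 - 1 - (2 * n - 1) = n - 2 := by omega
  have x3 : 3 * n - 2 - 1 - (2 * n - 2) = n - 1 := by omega
  have x4 : 2 * n - 1 - n = n - 1 := by omega
  have x5 : 2 * n - 2 - n = n - 2 := by omega
  refine ⟨?_, ?_⟩
  · intro i hi
    have hi : i = 5 ∨ i = 7 := by simpa using hi
    constructor
    · have := converse (D := oddD n) (ℓ := 3 * n - 2) (n := n) (p := 2 * n - 1) (a := 3) (b := i)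
        (d1 := 2 ^ (n + 1) - 3) (d2 := 3 * 2 ^ (n - 1) - i) (d3 := i * 2 ^ (n - 2) - 1)
      rw [x1, x2, x4] at this
      rcases hi with rfl | rfl
      all_goals
        exact this (by omega) (by omega) (by omega) (by omega) (by omega) (by omega) (by omega)
          (by omega) (by omega) (by omega) (mem_oddD.2 (by omega)) (mem_oddD.2 (by omega))
          (mem_oddD.2 (by omega)) (by omega) (by omega) (by omega)
    · have := converse (D := oddD n) (ℓ := 3 * n - 2) (n := n) (p := 2 * n - 2) (a := i) (b := 3)
        (d1 := 2 ^ (n + 1) - i) (d2 := i * 2 ^ (n - 2) - 3) (d3 := 3 * 2 ^ (n - 1) - 1)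
      rw [x1, x3, x5] at this
      rcases hi with rfl | rfl
      all_goals
        exact this (by omega) (by omega) (by omega) (by omega) (by omega) (by omega) (by omega)
          (by omega) (by omega) (by omega) (mem_oddD.2 (by omega)) (mem_oddD.2 (by omega))
          (mem_oddD.2 (by omega)) (by omega) (by omega) (by omega)
  · intro ℓ U hU hirr hlo hhi
    have hc := cyc_of_sol hn hU hirr hlo hhi
    obtain ⟨hw, hl, -⟩ := hc.tight
    refine ⟨hw, hl, ?_⟩
    obtain ⟨k0, s1, s2, s3⟩ := hc.start
    obtain ⟨a, b, p, hcase, hm, e1, e2, e3⟩ := (hc.shift k0).final0 s1 s2 s3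
    subst hl
    rcases hcase with ⟨rfl, hb, rfl⟩ | ⟨rfl, ha, rfl⟩
    · refine ⟨b, by simpa using hb, Or.inl ?_⟩
      rw [x2] at e3
      rw [x4] at e2
      have := reconstruct hU (by omega) (by omega) hm e1 e2 e3
      rw [x1, x2] at this
      rcases hb with rfl | rfl
      all_goals exact this (by omega) (by omega) (by omega)
    · refine ⟨a, by simpa using ha, Or.inr ?_⟩
      rw [x3] at e3
      rw [x5] at e2
      have := reconstruct hU (by omega) (by omega) hm e1 e2 e3
      rw [x1, x3] at this
      rcases ha with rfl | rfl
      all_goals exact this (by omega) (by omega) (by omega)
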